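/- If R is a right simple injective ring with ACC on right annihilators in which the right socle S_r is essential as a right ideal, then R is quasi-Frobenius. -/

import Mathlib

open MulOpposite in
/-- Right ideals of `R`, as submodules of `R` over `Rᵐᵒᵖ`. -/
abbrev RIdeal (R : Type*) [Ring R] := Submodule Rᵐᵒᵖ R

section Defs
variable (R : Type*) [Ring R]

/-- Left annihilator of a subset. -/
def lAnn (X : Set R) : Set R := {a | ∀ x ∈ X, a * x = 0}

/-- Right annihilator of a subset. -/
def rAnn (X : Set R) : Set R := {a | ∀ x ∈ X, x * a = 0}

/-- Right annihilator of a subset, as a right ideal. -/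
def rAnnI (X : Set R) : RIdeal R where
  carrier := rAnn R X
  add_mem' := by intro a b ha hb x hx; rw [mul_add, ha x hx, hb x hx, add_zero]
  zero_mem' := by intro x hx; rw [mul_zero]
  smul_mem' := by
    intro c a ha x hx
    show x * (a * c.unop) = 0
    rw [← mul_assoc, ha x hx, zero_mul]

/-- `R` is left P-injective: `rl(a) = aR` for every `a`. -/
def IsLeftPInjective : Prop :=
  ∀ a x : R, (∀ u : R, u * a = 0 → u * x = 0) ↔ ∃ s : R, x = a * s

/-- `R` is left 2-injective. -/
def IsLeft2Injective : Prop :=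
  ∀ (a b : R) (f : ↥(Submodule.span R ({a, b} : Set R)) →ₗ[R] R),
    ∃ g : R →ₗ[R] R, ∀ x : ↥(Submodule.span R ({a, b} : Set R)), g (x : R) = f x

/-- `R` is left FP-injective: every matrix ring over `R` is left P-injective. -/
def IsLeftFPInjective : Prop :=
  ∀ n : ℕ, IsLeftPInjective (Matrix (Fin n) (Fin n) R)

/-- A left ideal is small if `K + I = R` implies `K = R`. -/
def IsSmallLeftIdeal (I : Ideal R) : Prop := ∀ K : Ideal R, K ⊔ I = ⊤ → K = ⊤

/-- A complement left ideal: maximal with respect to intersecting some left ideal trivially. -/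
def IsComplementLeftIdeal (C : Ideal R) : Prop :=
  ∃ S : Ideal R, C ⊓ S = ⊥ ∧ ∀ C' : Ideal R, C ≤ C' → C' ⊓ S = ⊥ → C' = C

/-- A right ideal is essential in `R`. -/
def IsEssentialRIdeal (I : RIdeal R) : Prop := ∀ K : RIdeal R, K ⊓ I = ⊥ → K = ⊥

/-- The right socle: the sum of all simple (minimal) right ideals. -/
def rSocle : RIdeal R := sSup {m : RIdeal R | IsSimpleModule Rᵐᵒᵖ m}

/-- The right singular ideal. -/
def rSingular : Set R := {a | IsEssentialRIdeal R (rAnnI R {a})}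

/-- ACC on right annihilators. -/
def ACCOnRightAnnihilators : Prop :=
  ∀ f : ℕ → Set R, (∀ n, ∃ X : Set R, f n = rAnn R X) → (∀ n, f n ⊆ f (n + 1)) →
    ∃ n, ∀ m, n ≤ m → f m = f n

/-- The Jacobson radical, as a set. -/
def jacobsonSet : Set R := (TwoSidedIdeal.jacobson (⊥ : TwoSidedIdeal R) : Set R)

/-- A subset is nilpotent if products of some fixed length of its elements vanish. -/
def IsNilpotentSet (J : Set R) : Prop :=
  ∃ n : ℕ, ∀ f : Fin (n + 1) → R, (∀ i, f i ∈ J) → (List.ofFn f).prod = 0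

/-- `R` is quasi-Frobenius: left noetherian and left self-injective. -/
def IsQuasiFrobenius : Prop := IsNoetherianRing R ∧ Module.Injective R R

/-- `R` is right mininjective. -/
def IsRightMininjective : Prop :=
  ∀ (I : RIdeal R), IsSimpleModule Rᵐᵒᵖ I → ∀ f : I →ₗ[Rᵐᵒᵖ] R,
    ∃ c : R, ∀ x : I, f x = c * (x : R)

/-- `R` is left mininjective. -/
def IsLeftMininjective : Prop :=
  ∀ (I : Ideal R), IsSimpleModule R I → ∀ f : I →ₗ[R] R,
    ∃ c : R, ∀ x : I, f x = (x : R) * c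

/-- `R` is right simple injective. -/
def IsRightSimpleInjective : Prop :=
  ∀ (I : RIdeal R) (f : I →ₗ[Rᵐᵒᵖ] R), IsSimpleModule Rᵐᵒᵖ (LinearMap.range f) →
    ∃ c : R, ∀ x : I, f x = c * (x : R)

/-- `R` is left CS: every left ideal is essential in a direct summand of `R`. -/
def IsLeftCS : Prop :=
  ∀ I : Ideal R, ∃ K : Ideal R, (∃ K' : Ideal R, IsCompl K K') ∧ I ≤ K ∧
    ∀ L : Ideal R, L ≤ K → L ⊓ I = ⊥ → L = ⊥

/-- `R` is left min-CS: every minimal left ideal is essential in a direct summand. -/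
def IsLeftMinCS : Prop :=
  ∀ I : Ideal R, IsSimpleModule R I → ∃ K : Ideal R, (∃ K' : Ideal R, IsCompl K K') ∧ I ≤ K ∧
    ∀ L : Ideal R, L ≤ K → L ⊓ I = ⊥ → L = ⊥

/-- `R` is right Johns: right noetherian and every right ideal is a right annihilator. -/
def IsRightJohns : Prop :=
  IsNoetherianRing Rᵐᵒᵖ ∧ ∀ I : RIdeal R, ∃ X : Set R, (I : Set R) = rAnn R X

end Defs

section MoreDefs
variable (R : Type*) [Ring R]

/-- Left annihilator of a subset, as a left ideal. -/
def lAnnI (X : Set R) : Ideal R where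
  carrier := lAnn R X
  add_mem' := by intro a b ha hb x hx; rw [add_mul, ha x hx, hb x hx, add_zero]
  zero_mem' := by intro x hx; rw [zero_mul]
  smul_mem' := by
    intro c a ha x hx
    show c * a * x = 0
    rw [mul_assoc, ha x hx, mul_zero]

/-- A left ideal is essential in `R`. -/
def IsEssentialLIdeal (I : Ideal R) : Prop := ∀ K : Ideal R, K ⊓ I = ⊥ → K = ⊥

/-- The left singular ideal `Z_l`. -/
def lSingular : Set R := {a | IsEssentialLIdeal R (lAnnI R {a})}

end MoreDefs

namespace QFProof

open MulOpposite

section gen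
variable {A B : Type*} [Ring A] [Ring B]

lemma star_left (φ : A →+* B) (hφ : Function.Surjective φ) [IsSemisimpleRing B] (I : Ideal A) :
    ∃ e ∈ I, ∀ x ∈ I, φ x = φ x * φ e := by
  obtain ⟨e', he', h⟩ := IsSemisimpleRing.ideal_eq_span_idempotent (I.map φ)
  have h1 : e' ∈ I.map φ := by rw [h]; exact Submodule.mem_span_singleton_self e'
  obtain ⟨e, he, rfl⟩ := (Ideal.mem_map_iff_of_surjective φ hφ).1 h1
  refine ⟨e, he, fun x hx => ?_⟩
  have h2 : φ x ∈ I.map φ := Ideal.mem_map_of_mem φ hx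
  rw [h] at h2
  obtain ⟨b, hb⟩ := Submodule.mem_span_singleton.1 h2
  rw [← hb, smul_eq_mul, mul_assoc, he'.eq]

lemma semiprimary_of (φ : A →+* B) (hφ : Function.Surjective φ) [IsSemisimpleRing B]
    (hn : IsNilpotent (RingHom.ker φ)) : IsSemiprimaryRing A := by
  have e := RingHom.quotientKerEquivOfSurjective hφ
  have hss : IsSemisimpleRing (A ⧸ RingHom.ker φ) := e.symm.isSemisimpleRing
  have hJ : Ring.jacobson A = RingHom.ker φ := by
    apply le_antisymm
    · intro x hx
      rw [RingHom.mem_ker]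
      have : Ring.jacobson A ≤ (Ring.jacobson B).comap φ := by
        intro y hy
        let ψ : A →ₛₗ[φ] B := { toFun := φ, map_add' := map_add φ, map_smul' := by simp }
        have : RingHomSurjective φ := ⟨hφ⟩
        exact Module.le_comap_jacobson ψ hy
      have h2 := this hx
      rw [IsSemisimpleRing.jacobson_eq_bot] at h2
      simpa using h2
    · intro x hx
      rw [Ring.jacobson, Module.jacobson, Submodule.mem_sInf]
      intro M hM
      by_contra hxM
      have hlt : M < M ⊔ Submodule.span A {x} := by
        refine lt_of_le_of_ne le_sup_left fun h => hxM ?_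
        rw [h]
        exact Submodule.mem_sup_right (Submodule.mem_span_singleton_self x)
      have htop := hM.2 _ hlt
      have h1 : (1 : A) ∈ M ⊔ Submodule.span A {x} := by rw [htop]; trivial
      obtain ⟨m, hm, y, hy, hmy⟩ := Submodule.mem_sup.1 h1
      obtain ⟨a, rfl⟩ := Submodule.mem_span_singleton.1 hy
      obtain ⟨n, hn⟩ := hn
      have hnil : IsNilpotent (a • x) := by
        refine ⟨n, ?_⟩
        have : (a • x) ^ n ∈ (RingHom.ker φ) ^ n :=
          Ideal.pow_mem_pow (Ideal.mul_mem_left _ _ hx) n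
        rw [hn] at this
        simpa using this
      have hu := hnil.isUnit_one_sub
      have : 1 - a • x = m := by rw [← hmy]; simp
      rw [this] at hu
      exact hM.1 (Ideal.eq_top_of_isUnit_mem M hm hu)
  have : IsSemisimpleRing (A ⧸ Ring.jacobson A) := by
    have e2 : (A ⧸ Ring.jacobson A) ≃+* (A ⧸ RingHom.ker φ) := Ideal.quotEquivOfEq hJ
    exact e2.symm.isSemisimpleRing
  exact ⟨this, hJ ▸ hn⟩

end gen

variable {R : Type*} [Ring R]

/-- `kR` is a minimal right ideal. -/
def IsMin (k : R) : Prop := k ≠ 0 ∧ ∀ r : R, k * r ≠ 0 → ∃ s, k * r * s = k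

lemma IsMin.mul_right {k : R} (hk : IsMin k) {r : R} (h : k * r ≠ 0) : IsMin (k * r) := by
  refine ⟨h, fun t ht => ?_⟩
  obtain ⟨s, hs⟩ := hk.2 (r * t) (by rwa [← mul_assoc])
  exact ⟨s * r, by rw [← mul_assoc, mul_assoc k r t, hs]⟩

lemma IsMin.mul_left {k : R} (hk : IsMin k) {a : R} (h : a * k ≠ 0) : IsMin (a * k) := by
  refine ⟨h, fun t ht => ?_⟩
  obtain ⟨s, hs⟩ := hk.2 t (by intro h0; apply ht; rw [mul_assoc, h0, mul_zero])
  exact ⟨s, by rw [mul_assoc, mul_assoc, ← mul_assoc k, hs]⟩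

lemma ext_hom {P : Type*} [AddCommGroup P] [Module Rᵐᵒᵖ P] (g h : P →ₗ[Rᵐᵒᵖ] R)
    (hk : ∀ p, g p = 0 → h p = 0) :
    ∃ f : LinearMap.range g →ₗ[Rᵐᵒᵖ] R, ∀ p, f ⟨g p, p, rfl⟩ = h p := by
  refine ⟨((LinearMap.ker g).liftQ h (fun p hp => hk p hp)).comp
    g.quotKerEquivRange.symm.toLinearMap, fun p => ?_⟩
  have : g.quotKerEquivRange.symm ⟨g p, p, rfl⟩ = (LinearMap.ker g).mkQ p := by
    rw [LinearEquiv.symm_apply_eq]; rfl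
  simp only [LinearMap.comp_apply, LinearEquiv.coe_coe]
  rw [this]
  exact Submodule.liftQ_apply _ _ _

lemma si_ideal (hsi : IsRightSimpleInjective R) (I : RIdeal R) (f : I →ₗ[Rᵐᵒᵖ] R)
    (hs : ∀ x y, f x ≠ 0 → ∃ r : R, f y = f x * r) :
    ∃ c : R, ∀ x : I, f x = c * (x : R) := by
  by_cases h0 : ∀ x, f x = 0
  · exact ⟨0, fun x => by simp [h0]⟩
  push Not at h0
  obtain ⟨x0, hx0⟩ := h0
  apply hsi I f
  rw [isSimpleModule_iff_isAtom]
  constructor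
  · intro hb
    apply hx0
    have : f x0 ∈ LinearMap.range f := ⟨x0, rfl⟩
    rw [hb] at this
    simpa using this
  · intro N hN
    by_contra hNb
    obtain ⟨n, hn, hn0⟩ := Submodule.exists_mem_ne_zero_of_ne_bot hNb
    obtain ⟨x, rfl⟩ := hN.le hn
    apply hN.not_ge
    rintro _ ⟨y, rfl⟩
    obtain ⟨r, hr⟩ := hs x y hn0
    rw [hr]
    exact N.smul_mem (op r) hn

lemma si_ext (hsi : IsRightSimpleInjective R) {P : Type*} [AddCommGroup P] [Module Rᵐᵒᵖ P]
    (g h : P →ₗ[Rᵐᵒᵖ] R) (hk : ∀ p, g p = 0 → h p = 0)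
    (hs : ∀ x y, h x ≠ 0 → ∃ r : R, h y = h x * r) :
    ∃ c : R, ∀ p, h p = c * g p := by
  obtain ⟨f, hf⟩ := ext_hom g h hk
  obtain ⟨c, hc⟩ := si_ideal hsi _ f (by
    rintro ⟨_, p, rfl⟩ ⟨_, q, rfl⟩ hne
    rw [hf] at hne
    obtain ⟨r, hr⟩ := hs p q hne
    exact ⟨r, by rw [hf, hf, hr]⟩)
  exact ⟨c, fun p => by rw [← hf, hc]⟩

/-- left multiplication as a right-linear map -/
def lm (a : R) : R →ₗ[Rᵐᵒᵖ] R where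
  toFun x := a * x
  map_add' := mul_add a
  map_smul' := by
    intro c x
    show a * (x * c.unop) = a * x * c.unop
    rw [mul_assoc]

@[simp] lemma lm_apply (a x : R) : lm a x = a * x := rfl

lemma mininj (hsi : IsRightSimpleInjective R) {k y : R} (hk : IsMin k)
    (h : ∀ r, k * r = 0 → y * r = 0) : ∃ c, y = c * k := by
  obtain ⟨c, hc⟩ := si_ext hsi (lm k) (lm y) h (by
    intro r t hr
    simp only [lm_apply] at hr ⊢
    have hkr : k * r ≠ 0 := fun h0 => hr (h r h0)
    obtain ⟨s, hs⟩ := hk.2 r hkr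
    have h1 : k * (r * s - 1) = 0 := by rw [mul_sub, ← mul_assoc, hs, mul_one, sub_self]
    have h2 := h _ h1
    rw [mul_sub, mul_one, sub_eq_zero] at h2
    exact ⟨s * t, by rw [← mul_assoc, mul_assoc y r s, h2]⟩)
  exact ⟨c, by simpa using hc 1⟩

lemma left_simple (hsi : IsRightSimpleInjective R) {k a : R} (hk : IsMin k) (h : a * k ≠ 0) :
    ∃ c, c * (a * k) = k := by
  obtain ⟨c, hc⟩ := mininj hsi (hk.mul_left h) (y := k) (by
    intro r hr
    by_contra h0
    obtain ⟨s, hs⟩ := hk.2 r h0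
    apply h
    rw [← hs, ← mul_assoc, ← mul_assoc, hr, zero_mul])
  exact ⟨c, hc.symm⟩

lemma acc_max (hacc : ACCOnRightAnnihilators R) {ι : Type*} [Nonempty ι] (X : ι → Set R) :
    ∃ i, ∀ j, rAnn R (X i) ⊆ rAnn R (X j) → rAnn R (X j) ⊆ rAnn R (X i) := by
  by_contra hcon
  push Not at hcon
  choose f hf1 hf2 using hcon
  let i0 : ι := Classical.arbitrary ι
  let s : ℕ → ι := fun n => f^[n] i0
  have hs : ∀ n, s (n + 1) = f (s n) := fun n => Function.iterate_succ_apply' f n i0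
  obtain ⟨n, hn⟩ := hacc (fun n => rAnn R (X (s n))) (fun n => ⟨_, rfl⟩)
    (fun n => by simp only [hs]; exact hf1 _)
  have := hn (n + 1) (Nat.le_succ n)
  simp only [hs] at this
  exact hf2 (s n) this.subset

lemma exists_min (hess : IsEssentialRIdeal R (rSocle R)) {a : R} (ha : a ≠ 0) :
    ∃ x, IsMin (a * x) := by
  let T : RIdeal R := LinearMap.range (lm a)
  have hT : T ≠ ⊥ := by
    intro h
    have : a ∈ T := ⟨1, by simp⟩
    rw [h] at this
    exact ha (by simpa using this)
  have hne : T ⊓ rSocle R ≠ ⊥ := fun h => hT (hess T h)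
  have hss : IsSemisimpleModule Rᵐᵒᵖ (rSocle R) := by
    have := isSemisimpleModule_biSup_of_isSemisimpleModule_submodule (R := Rᵐᵒᵖ) (M := R)
      (s := {m : RIdeal R | IsSimpleModule Rᵐᵒᵖ m}) (p := id)
      (fun i hi => by
        have : IsSimpleModule Rᵐᵒᵖ i := hi
        show IsSemisimpleModule Rᵐᵒᵖ i
        infer_instance)
    rw [rSocle, sSup_eq_iSup]
    exact this
  have hss2 : IsSemisimpleModule Rᵐᵒᵖ ↥(T ⊓ rSocle R) :=
    IsSemisimpleModule.of_injective (Submodule.inclusion inf_le_right)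
      (Submodule.inclusion_injective _)
  obtain h | ⟨m, hm, hms⟩ := IsSemisimpleModule.eq_bot_or_exists_simple_le (T ⊓ rSocle R)
  · exact absurd h hne
  have hat := (isSimpleModule_iff_isAtom (m := m)).1 hms
  obtain ⟨k, hk, hk0⟩ := Submodule.exists_mem_ne_zero_of_ne_bot hat.1
  obtain ⟨x, hx⟩ := (hm hk).1
  have hx' : a * x = k := hx
  refine ⟨x, ?_⟩
  rw [hx']
  refine ⟨hk0, fun r hr => ?_⟩
  have hle : LinearMap.range (lm (k * r)) ≤ m := by
    rintro _ ⟨y, rfl⟩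
    have := m.smul_mem (op (r * y)) hk
    simpa [mul_assoc] using this
  have hmem : k ∈ LinearMap.range (lm (k * r)) := by
    rcases hle.lt_or_eq with hlt | heq
    · have hb := hat.2 _ hlt
      have : k * r ∈ LinearMap.range (lm (k * r)) := ⟨1, by simp⟩
      rw [hb] at this
      exact absurd (by simpa using this) hr
    · rw [heq]; exact hk
  obtain ⟨s, hs⟩ := hmem
  exact ⟨s, hs⟩

variable (R) in
/-- left annihilator of the right socle -/
def Z : Ideal R := lAnnI R {k | IsMin k}

lemma mem_Z {a : R} : a ∈ Z R ↔ ∀ k, IsMin k → a * k = 0 := Iff.rfl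

instance : (Z R).IsTwoSided := ⟨by
  intro a b ha k hk
  by_cases h : b * k = 0
  · rw [mul_assoc, h, mul_zero]
  · rw [mul_assoc]; exact ha _ (hk.mul_left h)⟩

lemma Z_nilp (hacc : ACCOnRightAnnihilators R) (hess : IsEssentialRIdeal R (rSocle R)) :
    IsNilpotent (Z R) := by
  obtain ⟨n, hn⟩ := hacc (fun n => rAnn R ((Z R ^ n : Ideal R) : Set R)) (fun n => ⟨_, rfl⟩)
    (fun n x hx y hy => hx y (Ideal.pow_le_pow_right (Nat.le_succ n) hy))
  have hn1 : rAnn R ((Z R ^ (n + 1) : Ideal R) : Set R) = rAnn R ((Z R ^ n : Ideal R) : Set R) :=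
    hn (n + 1) (Nat.le_succ n)
  refine ⟨n, ?_⟩
  by_contra hne
  have h1 : (1 : R) ∉ rAnn R ((Z R ^ n : Ideal R) : Set R) := by
    intro h
    apply hne
    rw [Submodule.zero_eq_bot, eq_bot_iff]
    intro x hx
    simpa using h x hx
  have : Nonempty {a : R // a ∉ rAnn R ((Z R ^ n : Ideal R) : Set R)} := ⟨⟨1, h1⟩⟩
  obtain ⟨⟨a, ha⟩, hmax⟩ := acc_max hacc
    (fun a : {a : R // a ∉ rAnn R ((Z R ^ n : Ideal R) : Set R)} => {a.1})
  apply ha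
  rw [← hn1]
  have hle : Z R ^ (n + 1) ≤ lAnnI R {a} := by
    rw [Submodule.pow_succ, Ideal.mul_le]
    intro w hw z hz
    have hza : z * a ∈ rAnn R ((Z R ^ n : Ideal R) : Set R) := by
      by_contra hza
      have ha0 : a ≠ 0 := by
        rintro rfl
        exact ha fun y _ => mul_zero y
      obtain ⟨x, hx⟩ := exists_min hess ha0
      have h2 := hmax ⟨z * a, hza⟩ (by
        intro t ht y hy
        have hy' : y = z * a := hy
        rw [hy', mul_assoc, ht a rfl, mul_zero])
      have h3 : x ∈ rAnn R {z * a} := by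
        intro y hy
        have hy' : y = z * a := hy
        rw [hy', mul_assoc]
        exact hz _ hx
      exact hx.1 (h2 h3 a rfl)
    intro y hy
    have hy' : y = a := hy
    rw [hy', mul_assoc]
    exact hza w hw
  intro y hy
  exact hle hy a rfl

lemma Z_fin (hacc : ACCOnRightAnnihilators R) :
    ∃ F : Finset R, (∀ k ∈ F, IsMin k) ∧ ∀ a : R, (∀ k ∈ F, a * k = 0) → a ∈ Z R := by
  classical
  have : Nonempty {F : Finset R // ∀ k ∈ F, IsMin k} := ⟨⟨∅, by simp⟩⟩
  obtain ⟨⟨F, hF⟩, hmax⟩ := acc_max hacc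
    (fun F : {F : Finset R // ∀ k ∈ F, IsMin k} => lAnn R (F.1 : Set R))
  refine ⟨F, hF, fun a ha k hk => ?_⟩
  have h := hmax ⟨insert k F, by
    intro x hx
    rcases Finset.mem_insert.1 hx with rfl | hx
    · exact hk
    · exact hF x hx⟩ (by
      intro t ht y hy
      exact ht y fun x hx => hy x (Finset.mem_insert_of_mem hx))
  have h1 : k ∈ rAnn R (lAnn R ((insert k F : Finset R) : Set R)) :=
    fun y hy => hy k (Finset.mem_insert_self k F)
  exact h h1 a ha

lemma Z_ss (hsi : IsRightSimpleInjective R) (hacc : ACCOnRightAnnihilators R) :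
    IsSemisimpleRing (R ⧸ Z R) := by
  obtain ⟨F, hF, hFZ⟩ := Z_fin hacc
  have hsimple : ∀ k : F, IsSimpleModule R (Submodule.span R {(k : R)}) := by
    rintro ⟨k, hk⟩
    have hk' := hF k hk
    rw [isSimpleModule_iff_isAtom]
    refine ⟨by simpa using hk'.1, fun N hN => ?_⟩
    by_contra hNb
    obtain ⟨n, hn, hn0⟩ := Submodule.exists_mem_ne_zero_of_ne_bot hNb
    obtain ⟨a, rfl⟩ := Submodule.mem_span_singleton.1 (hN.le hn)
    apply hN.not_ge
    rw [Submodule.span_singleton_le_iff_mem]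
    obtain ⟨c, hc⟩ := left_simple hsi hk' hn0
    have := N.smul_mem c hn
    simp only [smul_eq_mul] at this
    rwa [hc] at this
  let f : R →ₗ[R] ((k : F) → Submodule.span R {(k : R)}) :=
    LinearMap.pi fun k => LinearMap.toSpanSingleton R _
      ⟨(k : R), Submodule.mem_span_singleton_self _⟩
  have hf : ∀ a (k : F), ((f a k : Submodule.span R {(k : R)}) : R) = a * k := fun a k => rfl
  have hker : LinearMap.ker f = Z R := by
    ext a
    rw [LinearMap.mem_ker]
    constructor
    · intro h
      apply hFZ
      intro k hk
      rw [← hf a ⟨k, hk⟩, h]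
      rfl
    · intro h
      funext k
      apply Subtype.ext
      rw [hf]
      exact h _ (hF k k.2)
  have h1 : IsSemisimpleModule R (R ⧸ LinearMap.ker f) :=
    IsSemisimpleModule.congr f.quotKerEquivRange
  rw [hker] at h1
  let ψ : (R ⧸ Z R) →ₛₗ[Ideal.Quotient.mk (Z R)] (R ⧸ Z R) :=
    { toFun := id
      map_add' := fun _ _ => rfl
      map_smul' := by
        intro a x
        obtain ⟨x, rfl⟩ := Ideal.Quotient.mk_surjective x
        rfl }
  have : RingHomSurjective (Ideal.Quotient.mk (Z R)) := ⟨Ideal.Quotient.mk_surjective⟩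
  exact (ψ.isSemisimpleModule_iff_of_bijective Function.bijective_id).1 h1

lemma nil_of_mem (hn : IsNilpotent (Z R)) {z : R} (hz : z ∈ Z R) : IsNilpotent z := by
  obtain ⟨n, hn⟩ := hn
  refine ⟨n, ?_⟩
  have : z ^ n ∈ (Z R) ^ n := Ideal.pow_mem_pow hz n
  rw [hn] at this
  simpa using this

lemma min_mul_Z (hn : IsNilpotent (Z R)) {k z : R} (hk : IsMin k) (hz : z ∈ Z R) :
    k * z = 0 := by
  by_contra h
  obtain ⟨s, hs⟩ := hk.2 z h
  have hzs : z * s ∈ Z R := Ideal.mul_mem_right _ _ hz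
  obtain ⟨n, hn⟩ := nil_of_mem hn hzs
  have : ∀ m, k * (z * s) ^ m = k := by
    intro m
    induction m with
    | zero => simp
    | succ m ih => rw [pow_succ, ← mul_assoc, ih, ← mul_assoc, hs]
  exact hk.1 (by rw [← this n, hn, mul_zero])

/-- opposite of a right ideal -/
def opI (M : RIdeal R) : Ideal Rᵐᵒᵖ where
  carrier := {x | x.unop ∈ M}
  add_mem' := fun ha hb => M.add_mem ha hb
  zero_mem' := M.zero_mem
  smul_mem' := fun c x hx => M.smul_mem c hx

lemma star_right [IsSemisimpleRing (R ⧸ Z R)] (M : RIdeal R) :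
    ∃ e ∈ M, ∀ x ∈ M, x - e * x ∈ Z R := by
  let φ : Rᵐᵒᵖ →+* (R ⧸ Z R)ᵐᵒᵖ := RingHom.op (Ideal.Quotient.mk (Z R))
  have hφ : Function.Surjective φ := by
    intro y
    obtain ⟨x, hx⟩ := Ideal.Quotient.mk_surjective y.unop
    exact ⟨op x, by apply unop_injective; exact hx⟩
  obtain ⟨e, he, h⟩ := star_left φ hφ (opI M)
  refine ⟨e.unop, he, fun x hx => ?_⟩
  have := congrArg unop (h (op x) hx)
  rw [← Ideal.Quotient.eq, map_mul]
  exact this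

lemma star_left' [IsSemisimpleRing (R ⧸ Z R)] (M : Ideal R) :
    ∃ e ∈ M, ∀ x ∈ M, x - x * e ∈ Z R := by
  obtain ⟨e, he, h⟩ := star_left (Ideal.Quotient.mk (Z R)) Ideal.Quotient.mk_surjective M
  refine ⟨e, he, fun x hx => ?_⟩
  rw [← Ideal.Quotient.eq, map_mul]
  exact h x hx

lemma semiprimary_op [IsSemisimpleRing (R ⧸ Z R)] (hn : IsNilpotent (Z R)) :
    IsSemiprimaryRing Rᵐᵒᵖ := by
  let φ : Rᵐᵒᵖ →+* (R ⧸ Z R)ᵐᵒᵖ := RingHom.op (Ideal.Quotient.mk (Z R))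
  have hφ : Function.Surjective φ := by
    intro y
    obtain ⟨x, hx⟩ := Ideal.Quotient.mk_surjective y.unop
    exact ⟨op x, by apply unop_injective; exact hx⟩
  refine semiprimary_of φ hφ ?_
  obtain ⟨n, hn⟩ := hn
  have hk : ∀ x ∈ RingHom.ker φ, x.unop ∈ Z R := by
    intro x hx
    rw [← Ideal.Quotient.eq_zero_iff_mem]
    exact congrArg unop (RingHom.mem_ker.1 hx)
  have key : ∀ m, ∀ x ∈ (RingHom.ker φ) ^ m, x.unop ∈ Z R ^ m := by
    intro m
    induction m with
    | zero =>
      intro x _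
      rw [Submodule.pow_zero, Ideal.one_eq_top]
      trivial
    | succ m ih =>
      intro x hx
      rw [Submodule.pow_succ] at hx
      rw [Ideal.IsTwoSided.pow_succ]
      refine Submodule.mul_induction_on hx ?_ ?_
      · intro a ha b hb
        rw [unop_mul]
        exact Ideal.mul_mem_mul (hk b hb) (ih a ha)
      · intro a b ha hb
        rw [unop_add]
        exact add_mem ha hb
  refine ⟨n, ?_⟩
  rw [Submodule.zero_eq_bot, eq_bot_iff]
  intro x hx
  have := key n x hx
  rw [hn] at this
  have h2 : x.unop = 0 := by simpa using this
  simpa using h2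

/-- the iteration used for the Kasch property -/
def FF (I : Ideal R) : Ideal R where
  carrier := {a | ∀ k, IsMin k → (∀ i ∈ I, i * k = 0) → k * a = 0}
  add_mem' := fun ha hb k hk h => by rw [mul_add, ha k hk h, hb k hk h, add_zero]
  zero_mem' := fun k _ _ => mul_zero k
  smul_mem' := fun c a ha k hk h => by
    rw [smul_eq_mul, ← mul_assoc]
    by_cases h0 : k * c = 0
    · rw [h0, zero_mul]
    · exact ha _ (hk.mul_right h0) fun i hi => by rw [← mul_assoc, h i hi, zero_mul]

lemma mem_FF {I : Ideal R} {a : R} :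
    a ∈ FF I ↔ ∀ k, IsMin k → (∀ i ∈ I, i * k = 0) → k * a = 0 := Iff.rfl

instance (I : Ideal R) : (FF I).IsTwoSided := ⟨by
  intro a b ha k hk h
  rw [← mul_assoc, ha k hk h, zero_mul]⟩

lemma FF_mono {I I' : Ideal R} (h : I ≤ I') : FF I ≤ FF I' :=
  fun _ ha k hk hi => ha k hk fun i hi' => hi i (h hi')

lemma Z_le_FF (hn : IsNilpotent (Z R)) (I : Ideal R) : Z R ≤ FF I :=
  fun _ ha _ hk _ => min_mul_Z hn hk ha

lemma FF_inj (hsi : IsRightSimpleInjective R) [IsSemisimpleRing (R ⧸ Z R)]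
    (hn : IsNilpotent (Z R)) {I I' : Ideal R} [I'.IsTwoSided]
    (hZ : Z R ≤ I) (hF : FF I' ≤ FF I) : I' ≤ I := by
  have hX : ∀ k, IsMin k → (∀ i ∈ I, i * k = 0) → ∀ i ∈ I', i * k = 0 := by
    intro k hk hik
    obtain ⟨e, he, hM⟩ := star_right (rAnnI R {k})
    have hke : k * e = 0 := he k rfl
    have h1e : 1 - e ∉ FF I' := by
      intro h
      have := hF h k hk hik
      rw [mul_sub, mul_one, hke, sub_zero] at this
      exact hk.1 this
    rw [mem_FF] at h1e
    push Not at h1e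
    obtain ⟨x, hx, hix, hne⟩ := h1e
    have hy := hx.mul_right hne
    have hky : ∀ r, k * r = 0 → x * (1 - e) * r = 0 := by
      intro r hr
      have hr' : r ∈ rAnnI R {k} := by
        intro y hy
        have : y = k := hy
        rw [this, hr]
      have := hM r hr'
      rw [mul_assoc, sub_mul, one_mul]
      exact min_mul_Z hn hx this
    obtain ⟨c, hc⟩ := mininj hsi hy (y := k) (by
      intro r hr
      by_contra h0
      obtain ⟨s, hs⟩ := hk.2 r h0
      apply hne
      have h1 : k * (r * s - 1) = 0 := by rw [mul_sub, ← mul_assoc, hs, mul_one, sub_self]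
      have h2 := hky _ h1
      rw [mul_sub, ← mul_assoc, hr, zero_mul, mul_one, zero_sub, neg_eq_zero] at h2
      exact h2)
    intro i hi
    rw [hc, ← mul_assoc, ← mul_assoc, hix _ (Ideal.mul_mem_right _ _ hi), zero_mul]
  intro a ha
  by_contra haI
  obtain ⟨e, he, hM⟩ := star_left' I
  have hae : a * (1 - e) ∉ Z R := by
    intro h
    apply haI
    have h1 := I.add_mem (hZ h) (I.mul_mem_left a he)
    rwa [mul_sub, mul_one, sub_add_cancel] at h1
  rw [mem_Z] at hae
  push Not at hae
  obtain ⟨s, hs, hne⟩ := hae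
  have hne' : (1 - e) * s ≠ 0 := fun h => hne (by rw [mul_assoc, h, mul_zero])
  apply hne
  rw [mul_assoc]
  refine hX _ (hs.mul_left hne') ?_ a ha
  intro i hi
  have := hM i hi s hs
  rw [← mul_assoc, mul_sub, mul_one]
  exact this

lemma FF_Z_le (hsi : IsRightSimpleInjective R) (hacc : ACCOnRightAnnihilators R)
    [IsSemisimpleRing (R ⧸ Z R)] (hn : IsNilpotent (Z R)) : FF (Z R) ≤ Z R := by
  have hZ : ∀ n, Z R ≤ FF^[n] (Z R) := by
    intro n
    cases n with
    | zero => exact le_rfl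
    | succ n => rw [Function.iterate_succ_apply']; exact Z_le_FF hn _
  have hts : ∀ n, (FF^[n] (Z R)).IsTwoSided := by
    intro n
    cases n with
    | zero => simp only [Function.iterate_zero, id_eq]; infer_instance
    | succ n => rw [Function.iterate_succ_apply']; infer_instance
  have hmono : ∀ n, FF^[n] (Z R) ≤ FF^[n+1] (Z R) := by
    intro n
    induction n with
    | zero => exact hZ 1
    | succ n ih =>
      rw [Function.iterate_succ_apply', Function.iterate_succ_apply' FF (n+1)]
      exact FF_mono ih
  have hdesc : ∀ n, FF^[n+1] (Z R) ≤ FF^[n] (Z R) → FF (Z R) ≤ Z R := by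
    intro n
    induction n with
    | zero => exact fun h => h
    | succ n ih =>
      intro h
      apply ih
      rw [Function.iterate_succ_apply' FF (n+1), Function.iterate_succ_apply' FF n] at h
      have := hts (n+1)
      rw [Function.iterate_succ_apply' FF n] at this
      rw [Function.iterate_succ_apply' FF n]
      exact FF_inj hsi hn (hZ n) h
  obtain ⟨n, h⟩ := hacc (fun n => ((FF^[n+1] (Z R) : Ideal R) : Set R))
    (fun n => ⟨{k | IsMin k ∧ ∀ i ∈ FF^[n] (Z R), i * k = 0}, by
      ext a
      rw [Function.iterate_succ_apply']
      exact ⟨fun h x hx => h x hx.1 hx.2, fun h k hk hi => h k ⟨hk, hi⟩⟩⟩)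
    (fun n => hmono (n+1))
  exact hdesc (n+1) (h (n+1) (Nat.le_succ n)).subset

lemma kasch (hsi : IsRightSimpleInjective R) (hacc : ACCOnRightAnnihilators R)
    [IsSemisimpleRing (R ⧸ Z R)] (hn : IsNilpotent (Z R)) (M : RIdeal R) (h1 : (1 : R) ∉ M) :
    ∃ w, IsMin w ∧ ∀ m ∈ M, w * m = 0 := by
  obtain ⟨e, he, hM⟩ := star_right M
  have h1e : 1 - e ∉ FF (Z R) := by
    intro h
    have hz := FF_Z_le hsi hacc hn h
    have hu := (nil_of_mem hn hz).isUnit_one_sub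
    rw [sub_sub_cancel] at hu
    obtain ⟨u, hu⟩ := hu
    apply h1
    have := M.smul_mem (op (↑u⁻¹ : R)) he
    rw [← hu] at this
    simpa using this
  rw [mem_FF] at h1e
  push Not at h1e
  obtain ⟨x, hx, -, hne⟩ := h1e
  refine ⟨_, hx.mul_right hne, fun m hm => ?_⟩
  rw [mul_assoc, sub_mul, one_mul]
  exact min_mul_Z hn hx (hM m hm)

/-- `rl(T) = T` -/
lemma rl (hsi : IsRightSimpleInjective R) (hacc : ACCOnRightAnnihilators R)
    [IsSemisimpleRing (R ⧸ Z R)] (hn : IsNilpotent (Z R)) (T : RIdeal R) (b : R)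
    (hb : ∀ u : R, (∀ t ∈ T, u * t = 0) → u * b = 0) : b ∈ T := by
  by_contra hbT
  obtain ⟨w, hw, hwM⟩ := kasch hsi hacc hn (T.comap (lm b)) (by simpa using hbT)
  let g : (R × T) →ₗ[Rᵐᵒᵖ] R := LinearMap.coprod (lm b) T.subtype
  let h : (R × T) →ₗ[Rᵐᵒᵖ] R := (lm w).comp (LinearMap.fst Rᵐᵒᵖ R T)
  obtain ⟨c, hc⟩ := si_ext hsi g h (by
    rintro ⟨r, t⟩ hp
    have hp' : b * r + t = 0 := hp
    apply hwM
    show b * r ∈ T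
    rw [eq_neg_of_add_eq_zero_left hp']
    exact T.neg_mem t.2) (by
    rintro ⟨r, t⟩ ⟨r', t'⟩ hne
    have hne' : w * r ≠ 0 := hne
    obtain ⟨s, hs⟩ := hw.2 r hne'
    refine ⟨s * r', ?_⟩
    show w * r' = w * r * (s * r')
    rw [← mul_assoc, hs])
  have h1 : ∀ t ∈ T, c * t = 0 := by
    intro t ht
    have := hc (0, ⟨t, ht⟩)
    simpa [g, h] using this.symm
  have h2 := hb c h1
  have h3 := hc (1, 0)
  apply hw.1
  simpa [g, h, h2] using h3

lemma right_noeth (hsi : IsRightSimpleInjective R) (hacc : ACCOnRightAnnihilators R)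
    [IsSemisimpleRing (R ⧸ Z R)] (hn : IsNilpotent (Z R)) : IsNoetherian Rᵐᵒᵖ R := by
  rw [← monotone_stabilizes_iff_noetherian]
  intro f
  obtain ⟨n, h⟩ := hacc (fun n => (f n : Set R)) (fun n => ⟨lAnn R (f n : Set R), by
    ext b
    constructor
    · intro hb u hu
      exact hu b hb
    · intro hb
      exact rl hsi hacc hn _ b fun u hu => hb u hu⟩)
    (fun n => f.monotone (Nat.le_succ n))
  exact ⟨n, fun m hm => SetLike.coe_injective (h m hm).symm⟩

lemma right_inj (hsi : IsRightSimpleInjective R) [IsNoetherian Rᵐᵒᵖ R] [IsArtinian Rᵐᵒᵖ R]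
    (I : RIdeal R) : ∀ f : I →ₗ[Rᵐᵒᵖ] R, ∃ c : R, ∀ x : I, f x = c * (x : R) := by
  induction I using WellFoundedLT.induction with
  | ind I ih =>
  intro f
  by_cases hI : I = ⊥
  · refine ⟨0, fun x => ?_⟩
    have : x = 0 := by
      apply Subtype.ext
      exact (Submodule.mem_bot Rᵐᵒᵖ).1 (hI.le x.2)
    simp [this]
  obtain ⟨I', -, hcov⟩ := exists_le_covBy_of_lt (bot_lt_iff_ne_bot.2 hI)
  obtain ⟨c, hc⟩ := ih I' hcov.lt (f.comp (Submodule.inclusion hcov.le))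
  let f' : I →ₗ[Rᵐᵒᵖ] R := f - (lm c).comp I.subtype
  have hf' : ∀ x : I, f' x = f x - c * x := fun x => rfl
  have hker : ∀ x : I, (x : R) ∈ I' → f' x = 0 := by
    intro x hx
    have := hc ⟨x, hx⟩
    rw [hf', sub_eq_zero]
    exact this
  obtain ⟨d, hd⟩ := si_ideal hsi I f' (by
    intro x y hx
    have hxI' : (x : R) ∉ I' := fun h => hx (hker x h)
    have hlt : I' < I' ⊔ LinearMap.range (lm (x : R)) := by
      refine lt_of_le_of_ne le_sup_left fun h => hxI' ?_
      rw [h]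
      exact Submodule.mem_sup_right ⟨1, by simp⟩
    have hle : I' ⊔ LinearMap.range (lm (x : R)) ≤ I := by
      refine sup_le hcov.le ?_
      rintro _ ⟨r, rfl⟩
      exact I.smul_mem (op r) x.2
    have heq : I' ⊔ LinearMap.range (lm (x : R)) = I := by
      rcases hle.lt_or_eq with h | h
      · exact absurd h (hcov.2 hlt)
      · exact h
    have hy : (y : R) ∈ I' ⊔ LinearMap.range (lm (x : R)) := by rw [heq]; exact y.2
    obtain ⟨i, hi, z, ⟨r, rfl⟩, hiz⟩ := Submodule.mem_sup.1 hy
    refine ⟨r, ?_⟩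
    have : y = ⟨i, hcov.le hi⟩ + (op r) • x := by
      apply Subtype.ext
      rw [← hiz]
      rfl
    rw [this, map_add, hker _ hi, zero_add, map_smul]
    rfl)
  refine ⟨c + d, fun x => ?_⟩
  have := hd x
  rw [hf', sub_eq_iff_eq_add] at this
  rw [this, add_mul, add_comm]

/-- `lr(L) = L` for finitely generated `L`. -/
lemma lr (hsi : IsRightSimpleInjective R) [IsNoetherian Rᵐᵒᵖ R] [IsArtinian Rᵐᵒᵖ R]
    (s : Finset R) : ∀ b : R, (∀ x, (∀ a ∈ s, a * x = 0) → b * x = 0) →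
      b ∈ Submodule.span R (s : Set R) := by
  classical
  induction s using Finset.induction_on with
  | empty =>
    intro b hb
    have := hb 1 (by simp)
    rw [mul_one] at this
    rw [this]
    exact zero_mem _
  | insert a s _ ih =>
    intro b hb
    let N : RIdeal R := rAnnI R (s : Set R)
    obtain ⟨f, hf⟩ := ext_hom ((lm a).comp N.subtype) ((lm b).comp N.subtype) (by
      rintro ⟨x, hx⟩ hax
      refine hb x fun a' ha' => ?_
      rcases Finset.mem_insert.1 ha' with rfl | h
      · exact hax
      · exact hx a' h)
    obtain ⟨c, hc⟩ := right_inj hsi _ f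
    have h1 : b - c * a ∈ Submodule.span R (s : Set R) := by
      apply ih
      intro x hx
      have h2 := hf ⟨x, fun a' ha' => hx a' ha'⟩
      rw [hc] at h2
      have h3 : c * (a * x) = b * x := h2
      rw [sub_mul, mul_assoc, h3, sub_self]
    have h4 : b = (b - c * a) + c • a := by simp
    rw [h4]
    refine add_mem (Submodule.span_mono (by simp) h1) (Submodule.smul_mem _ _ ?_)
    exact Submodule.subset_span (by simp)

lemma left_noeth (hsi : IsRightSimpleInjective R) [IsNoetherian Rᵐᵒᵖ R] [IsArtinian Rᵐᵒᵖ R] :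
    IsNoetherianRing R := by
  classical
  rw [isNoetherianRing_iff, isNoetherian_def]
  intro L
  let S : Set (RIdeal R) := {N | ∃ s : Finset R, (s : Set R) ⊆ L ∧ N = rAnnI R (s : Set R)}
  have hS : S.Nonempty := ⟨_, ∅, by simp, rfl⟩
  obtain ⟨N, ⟨s, hs, rfl⟩, hmin⟩ := IsArtinian.set_has_minimal S hS
  refine ⟨s, le_antisymm (Submodule.span_le.2 hs) fun b hb => ?_⟩
  apply lr hsi
  intro x hx
  have h1 : rAnnI R ((insert b s : Finset R) : Set R) ≤ rAnnI R (s : Set R) :=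
    fun t ht a ha => ht a (Finset.mem_insert_of_mem ha)
  have h2 := hmin (rAnnI R ((insert b s : Finset R) : Set R)) ⟨insert b s, by
    intro y hy
    rcases Finset.mem_insert.1 hy with rfl | h
    · exact hb
    · exact hs h, rfl⟩
  have h3 : rAnnI R (s : Set R) ≤ rAnnI R ((insert b s : Finset R) : Set R) := by
    rcases h1.lt_or_eq with h | h
    · exact absurd h h2
    · exact h.ge
  exact h3 (show x ∈ rAnnI R (s : Set R) from fun a ha => hx a ha) b (Finset.mem_insert_self b s)

lemma left_inj (hsi : IsRightSimpleInjective R) (hacc : ACCOnRightAnnihilators R)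
    [IsSemisimpleRing (R ⧸ Z R)] (hn : IsNilpotent (Z R))
    [IsNoetherian Rᵐᵒᵖ R] [IsArtinian Rᵐᵒᵖ R] (L : Ideal R) (g : L →ₗ[R] R)
    (s : Finset R) : (s : Set R) ⊆ L → ∃ d : R, ∀ a (h : a ∈ L), a ∈ s → g ⟨a, h⟩ = a * d := by
  classical
  induction s using Finset.induction_on with
  | empty => intro _; exact ⟨0, by simp⟩
  | insert a s _ ih =>
    intro hsL
    have hsL' : (s : Set R) ⊆ L := fun x hx => hsL (Finset.mem_insert_of_mem hx)
    have haL : a ∈ L := hsL (Finset.mem_insert_self a s)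
    obtain ⟨d, hd⟩ := ih hsL'
    have hspan : ∀ y ∈ Submodule.span R (s : Set R), ∃ h : y ∈ L, g ⟨y, h⟩ = y * d := by
      intro y hy
      induction hy using Submodule.span_induction with
      | mem x hx => exact ⟨hsL' hx, hd x (hsL' hx) hx⟩
      | zero => exact ⟨L.zero_mem, by rw [zero_mul]; exact map_zero g⟩
      | add x y _ _ hx hy =>
        obtain ⟨hx, hx'⟩ := hx
        obtain ⟨hy, hy'⟩ := hy
        refine ⟨L.add_mem hx hy, ?_⟩
        rw [add_mul, ← hx', ← hy', ← map_add]
        rfl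
      | smul c x _ hx =>
        obtain ⟨hx, hx'⟩ := hx
        refine ⟨L.smul_mem c hx, ?_⟩
        exact (map_smul g c ⟨x, hx⟩).trans ((congrArg (c • ·) hx').trans (mul_assoc c x d).symm)
    let N : RIdeal R := rAnnI R (s : Set R)
    have hmem : g ⟨a, haL⟩ - a * d ∈ N.map (lm a) := by
      apply rl hsi hacc hn
      intro u hu
      have hua : u * a ∈ Submodule.span R (s : Set R) := by
        apply lr hsi
        intro x hx
        rw [mul_assoc]
        exact hu _ ⟨x, fun a' ha' => hx a' ha', rfl⟩
      obtain ⟨h1, h2⟩ := hspan _ hua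
      have h3 : g ⟨u * a, h1⟩ = u * g ⟨a, haL⟩ :=
        map_smul g u ⟨a, haL⟩
      rw [mul_sub, ← h3, h2, mul_assoc, sub_self]
    obtain ⟨t, ht, hat⟩ := hmem
    have hat' : a * t = g ⟨a, haL⟩ - a * d := hat
    refine ⟨d + t, fun a' h' ha' => ?_⟩
    rcases Finset.mem_insert.1 ha' with rfl | h
    · rw [mul_add, hat']
      abel
    · rw [mul_add, ht a' h, add_zero]
      exact hd a' h' h

end QFProof

/-- Right simple injective with ACC on right annihilators and essential right
socle implies QF. -/
theorem stmt17 (R : Type*) [Ring R] (hsi : IsRightSimpleInjective R)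
    (hacc : ACCOnRightAnnihilators R) (hess : IsEssentialRIdeal R (rSocle R)) :
    IsQuasiFrobenius R := by
  have hn := QFProof.Z_nilp hacc hess
  have hss := QFProof.Z_ss hsi hacc
  have hsp := QFProof.semiprimary_op hn
  have hno : IsNoetherian Rᵐᵒᵖ R := QFProof.right_noeth hsi hacc hn
  have har : IsArtinian Rᵐᵒᵖ R := IsSemiprimaryRing.isNoetherian_iff_isArtinian.1 hno
  have hln := QFProof.left_noeth hsi
  refine ⟨hln, Module.Baer.injective ?_⟩
  intro L g
  obtain ⟨s, hs⟩ := IsNoetherian.noetherian L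
  obtain ⟨d, hd⟩ := QFProof.left_inj hsi hacc hn L g s (by rw [← hs]; exact Submodule.subset_span)
  refine ⟨LinearMap.toSpanSingleton R R d, fun x hx => ?_⟩
  have hx' : x ∈ Submodule.span R (s : Set R) := by rw [hs]; exact hx
  have key : ∀ y ∈ Submodule.span R (s : Set R), ∃ h : y ∈ L, g ⟨y, h⟩ = y * d := by
    intro y hy
    have hsL' : (s : Set R) ⊆ L := by rw [← hs]; exact Submodule.subset_span
    induction hy using Submodule.span_induction with
    | mem x hx => exact ⟨hsL' hx, hd x (hsL' hx) hx⟩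
    | zero => exact ⟨L.zero_mem, by rw [zero_mul]; exact map_zero g⟩
    | add x y _ _ hx hy =>
      obtain ⟨hx, hx'⟩ := hx
      obtain ⟨hy, hy'⟩ := hy
      refine ⟨L.add_mem hx hy, ?_⟩
      rw [add_mul, ← hx', ← hy', ← map_add]
      rfl
    | smul c x _ hx =>
      obtain ⟨hx, hx'⟩ := hx
      refine ⟨L.smul_mem c hx, ?_⟩
      exact (map_smul g c ⟨x, hx⟩).trans ((congrArg (c • ·) hx').trans (mul_assoc c x d).symm)
  obtain ⟨h, hg⟩ := key x hx'
  rw [hg]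
  simp
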